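/- Let t > 0, λ > 0, η₁ > 1, η₂ > 0, and p, q > 0 with p + q = 1. Then H₂(t,x) = (1/(2√π))·(η₂λtq)^{1/4}·exp{η₁λtp/(η₁+η₂) − λt}·(log(1/x))^{−3/4}·exp{2√(η₂λtq)·√(log(1/x))}·(1 + O((log(1/x))^{−1/2})) as x → 0. -/

import Mathlib

open Filter Asymptotics MeasureTheory

/-- `P_{n,k}` from Kou's double exponential jump model: `P_{n,n} = p^n` and, for
`1 ≤ k ≤ n−1`,
`P_{n,k} = Σ_{i=k}^{n−1} C(n−k−1, i−k) C(n,i) (η₁/(η₁+η₂))^{i−k} (η₂/(η₁+η₂))^{n−i} p^i q^{n−i}`. -/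
noncomputable def Pcoef (η₁ η₂ p q : ℝ) (n k : ℕ) : ℝ :=
  if k = n then p ^ n
  else ∑ i ∈ Finset.Ico k n,
    ((n - k - 1).choose (i - k) : ℝ) * (n.choose i : ℝ) *
      (η₁ / (η₁ + η₂)) ^ (i - k) * (η₂ / (η₁ + η₂)) ^ (n - i) * p ^ i * q ^ (n - i)

/-- `Q_{n,k}` from Kou's double exponential jump model: `Q_{n,n} = q^n` and, for
`1 ≤ k ≤ n−1`,
`Q_{n,k} = Σ_{i=k}^{n−1} C(n−k−1, i−k) C(n,i) (η₁/(η₁+η₂))^{n−i} (η₂/(η₁+η₂))^{i−k} p^{n−i} q^i`. -/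
noncomputable def Qcoef (η₁ η₂ p q : ℝ) (n k : ℕ) : ℝ :=
  if k = n then q ^ n
  else ∑ i ∈ Finset.Ico k n,
    ((n - k - 1).choose (i - k) : ℝ) * (n.choose i : ℝ) *
      (η₁ / (η₁ + η₂)) ^ (n - i) * (η₂ / (η₁ + η₂)) ^ (i - k) * p ^ (n - i) * q ^ i

/-- The Poisson weights `π_n = e^{−λt} (λt)^n / n!`. -/
noncomputable def poisCoef (lam t : ℝ) (n : ℕ) : ℝ :=
  Real.exp (-(lam * t)) * (lam * t) ^ n / (n.factorial : ℝ)

/-- `a_k = (η₁^{k+1}/k!) Σ_{n=k+1}^∞ π_n P_{n,k+1}` (the series is reindexed by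
`n = m + (k+1)`, `m ≥ 0`). -/
noncomputable def aCoef (lam t η₁ η₂ p q : ℝ) (k : ℕ) : ℝ :=
  η₁ ^ (k + 1) / (k.factorial : ℝ) *
    ∑' m : ℕ, poisCoef lam t (m + (k + 1)) * Pcoef η₁ η₂ p q (m + (k + 1)) (k + 1)

/-- `b_k = (η₂^{k+1}/k!) Σ_{n=k+1}^∞ π_n Q_{n,k+1}` (the series is reindexed by
`n = m + (k+1)`, `m ≥ 0`). -/
noncomputable def bCoef (lam t η₁ η₂ p q : ℝ) (k : ℕ) : ℝ :=
  η₂ ^ (k + 1) / (k.factorial : ℝ) *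
    ∑' m : ℕ, poisCoef lam t (m + (k + 1)) * Qcoef η₁ η₂ p q (m + (k + 1)) (k + 1)

/-- `G₁(t,u) = Σ_{k=0}^∞ a_k u^k`. -/
noncomputable def G1 (lam t η₁ η₂ p q : ℝ) (u : ℝ) : ℝ :=
  ∑' k : ℕ, aCoef lam t η₁ η₂ p q k * u ^ k

/-- `G₂(t,−u) = Σ_{k=0}^∞ b_k u^k`; `G2m lam t η₁ η₂ p q u` stands for `G₂(t,−u)`. -/
noncomputable def G2m (lam t η₁ η₂ p q : ℝ) (u : ℝ) : ℝ :=
  ∑' k : ℕ, bCoef lam t η₁ η₂ p q k * u ^ k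

/-- `H₁(t,x) = G₁(t, log x)` for `x > 1`. -/
noncomputable def H1fun (lam t η₁ η₂ p q : ℝ) (x : ℝ) : ℝ :=
  G1 lam t η₁ η₂ p q (Real.log x)

/-- `H₂(t,x) = G₂(t, log x) = G2m(t, log(1/x))` for `0 < x < 1`. -/
noncomputable def H2fun (lam t η₁ η₂ p q : ℝ) (x : ℝ) : ℝ :=
  G2m lam t η₁ η₂ p q (Real.log x⁻¹)

/-- The density of the absolutely continuous part of the law of the exponential compound
Poisson factor: `H(t,x) = H₁(t,x) x^{−η₁−1}` for `x > 1` and `H(t,x) = H₂(t,x) x^{η₂−1}`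
for `0 < x < 1`. -/
noncomputable def Hfun (lam t η₁ η₂ p q : ℝ) (x : ℝ) : ℝ :=
  if 1 < x then H1fun lam t η₁ η₂ p q x * x ^ (-η₁ - 1)
  else H2fun lam t η₁ η₂ p q x * x ^ (η₂ - 1)

/-- The Mellin convolution of two measurable functions on `(0,∞)`:
`f ⋆_M g (x) = ∫_0^∞ f(x/t) g(t) dt/t`. -/
noncomputable def mellinConv (f g : ℝ → ℝ) (x : ℝ) : ℝ :=
  ∫ t in Set.Ioi (0:ℝ), f (x / t) * g t / t

/-!
Put `z = η₂λtq` and `E = exp (η₁λtp / (η₁ + η₂) - λt)`. In the double sum that defines `b_k`, the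
terms with `i = k + 1` add up to `E z^{k+1} / (k! (k+1)!)`, and all the others carry an additional
factor `O(1 / (k + 2))`, uniformly in `k`. Hence `G₂(t,−u)` is `E √(z/u) I₁(2√(zu))` up to an error
`O(I₂(2√(zu)) / u)`, which is smaller by a factor of order `u^{-1/2}`. The behaviour of these Bessel
functions at infinity comes from Poisson's integral `∫ exp (y cos θ) sin^{2n} θ dθ` over `[0, π]`:
the substitution `r = 1 - cos θ` turns it into a Laplace integral, to which Watson's lemma applies.
-/

section BesselSeries

open Real Set
open scoped Nat

lemma hasSum_pow_div_factorial (x : ℝ) : HasSum (fun n : ℕ ↦ x ^ n / n !) (exp x) := by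
  simpa only [exp_eq_exp_ℝ] using NormedSpace.expSeries_div_hasSum_exp x

lemma hasSum_integral_pow_mul_div_factorial {f g : ℝ → ℝ} (hf : Continuous f) (hg : Continuous g)
    (a b : ℝ) :
    HasSum (fun n : ℕ ↦ (∫ x in a..b, f x ^ n * g x) / n !) (∫ x in a..b, exp (f x) * g x) := by
  have bound_eq (x : ℝ) : ∑' n : ℕ, |f x| ^ n / n ! * |g x| = exp |f x| * |g x| :=
    ((hasSum_pow_div_factorial _).mul_right _).tsum_eq
  have key := intervalIntegral.hasSum_integral_of_dominated_convergence (μ := volume)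
    (a := a) (b := b) (F := fun n x ↦ f x ^ n / n ! * g x) (f := fun x ↦ exp (f x) * g x)
    (fun n x ↦ |f x| ^ n / n ! * |g x|)
    (fun n ↦ Continuous.aestronglyMeasurable (by fun_prop))
    (fun n ↦ .of_forall fun x _ ↦ by simp)
    (.of_forall fun x _ ↦ (hasSum_pow_div_factorial _).summable.mul_right _)
    (by simp only [bound_eq]; exact Continuous.intervalIntegrable (by fun_prop) _ _)
    (.of_forall fun x _ ↦ (hasSum_pow_div_factorial _).mul_right _)
  simpa only [div_mul_eq_mul_div, intervalIntegral.integral_div] using key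

lemma integral_cos_pow_odd_mul_sin_pow (k m : ℕ) :
    ∫ x in 0..π, cos x ^ (2 * k + 1) * sin x ^ m = 0 := by
  have reflect := intervalIntegral.integral_comp_sub_left (a := 0) (b := π)
    (fun x ↦ cos x ^ (2 * k + 1) * sin x ^ m) π
  simp only [cos_pi_sub, sin_pi_sub, sub_self, sub_zero, (odd_two_mul_add_one k).neg_pow,
    neg_mul, intervalIntegral.integral_neg] at reflect
  linarith

lemma integral_cos_pow_even (k : ℕ) :
    ∫ x in 0..π, cos x ^ (2 * k) = Gamma (k + 1 / 2) * √π / k ! := by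
  induction k with
  | zero => simp [-one_div, Gamma_one_half_eq, mul_self_sqrt, pi_nonneg]
  | succ k ih =>
    rw [show 2 * (k + 1) = 2 * k + 2 by ring, integral_cos_pow, ih, Nat.cast_succ,
      add_right_comm (k : ℝ), Gamma_add_one (by positivity), Nat.factorial_succ]
    push_cast [sin_pi, sin_zero]
    field_simp
    ring

lemma integral_cos_pow_even_mul_sin_pow_even (k n : ℕ) :
    ∫ x in 0..π, cos x ^ (2 * k) * sin x ^ (2 * n) =
      Gamma (k + 1 / 2) * Gamma (n + 1 / 2) / (k + n)! := by
  induction n generalizing k with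
  | zero => simpa [-one_div, Gamma_one_half_eq] using integral_cos_pow_even k
  | succ n ih =>
    have split_sin (x : ℝ) : cos x ^ (2 * k) * sin x ^ (2 * (n + 1)) =
        cos x ^ (2 * k) * sin x ^ (2 * n) - cos x ^ (2 * (k + 1)) * sin x ^ (2 * n) := by
      rw [show 2 * (n + 1) = 2 * n + 2 by ring, pow_add (sin x), sin_sq]
      ring
    simp_rw [split_sin]
    rw [intervalIntegral.integral_sub (Continuous.intervalIntegrable (by fun_prop) _ _)
      (Continuous.intervalIntegrable (by fun_prop) _ _), ih, ih, Nat.cast_succ, Nat.cast_succ,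
      add_right_comm (k : ℝ), add_right_comm (n : ℝ), Gamma_add_one (by positivity),
      Gamma_add_one (by positivity), show k + 1 + n = k + n + 1 by ring, ← add_assoc,
      Nat.factorial_succ]
    push_cast
    field_simp
    ring

lemma Gamma_nat_add_one_half_eq_factorial (k : ℕ) :
    Gamma (k + 1 / 2) = (2 * k)! * √π / (4 ^ k * k !) := by
  induction k with
  | zero => simp [-one_div, Gamma_one_half_eq]
  | succ k ih =>
    rw [Nat.cast_succ, add_right_comm (k : ℝ), Gamma_add_one (by positivity), ih,
      show 2 * (k + 1) = 2 * k + 1 + 1 by ring]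
    simp only [Nat.factorial_succ]
    push_cast
    field_simp
    ring

/-- The entire function `w ↦ w ^ (-n / 2) * I_n (2 * √w)`, where `I_n` is the modified Bessel
function of the first kind of order `n`; the normalization makes it a power series in `w`. -/
noncomputable def besselSeries (n : ℕ) (w : ℝ) : ℝ :=
  ∑' k : ℕ, w ^ k / (k ! * (k + n)!)

lemma summable_besselSeries (n : ℕ) (w : ℝ) :
    Summable fun k : ℕ ↦ w ^ k / (k ! * (k + n)!) := by
  refine .of_norm_bounded (summable_pow_div_factorial |w|) fun k ↦ ?_
  have one_le : (1 : ℝ) ≤ (k + n)! := mod_cast (k + n).factorial_pos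
  rw [norm_div, norm_pow, norm_mul, norm_natCast, norm_natCast, norm_eq_abs]
  gcongr
  exact le_mul_of_one_le_right (by positivity) one_le

/-- Poisson's integral: only the even powers in the expansion of `exp (2 * x * cos θ)`
contribute. -/
lemma sqrt_pi_mul_Gamma_mul_besselSeries_sq (n : ℕ) (x : ℝ) :
    √π * Gamma (n + 1 / 2) * besselSeries n (x ^ 2) =
      ∫ θ in 0..π, exp (2 * x * cos θ) * sin θ ^ (2 * n) := by
  have expand := hasSum_integral_pow_mul_div_factorial (f := fun θ ↦ 2 * x * cos θ)
    (g := fun θ ↦ sin θ ^ (2 * n)) (by fun_prop) (by fun_prop) 0 π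
  simp only [mul_pow _ (cos _), mul_assoc ((2 * x) ^ _), intervalIntegral.integral_const_mul]
    at expand
  rw [← (mul_right_injective₀ two_ne_zero).hasSum_iff] at expand
  · rw [← expand.tsum_eq, besselSeries, ← tsum_mul_left]
    refine tsum_congr fun k ↦ ?_
    rw [Function.comp_apply, integral_cos_pow_even_mul_sin_pow_even,
      Gamma_nat_add_one_half_eq_factorial k, pow_mul, mul_pow, mul_pow,
      show (2 : ℝ) ^ 2 = 4 by norm_num]
    field_simp
  · intro j hj
    obtain ⟨k, rfl | rfl⟩ := j.even_or_odd'
    · exact absurd ⟨k, rfl⟩ hj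
    · simp [integral_cos_pow_odd_mul_sin_pow]

lemma isBigO_integral_rpow_mul_exp_neg_mul_Ioi {a c C : ℝ} {f : ℝ → ℝ} (ha : 0 < a)
    (hf : AEStronglyMeasurable f (volume.restrict (Ioi 0))) (hfc : ∀ r > 0, |f r - c| ≤ C * r) :
    (fun y ↦ (∫ r in Ioi 0, r ^ (a - 1) * exp (-(y * r)) * f r) - c * Gamma a * y ^ (-a))
      =O[atTop] fun y ↦ y ^ (-(a + 1)) := by
  refine .of_bound (C * Gamma (a + 1)) ?_
  filter_upwards [eventually_gt_atTop 0] with y hy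
  have integral_eq {b : ℝ} (hb : 0 < b) :
      ∫ r in Ioi 0, r ^ (b - 1) * exp (-(y * r)) = Gamma b * y ^ (-b) := by
    rw [integral_rpow_mul_exp_neg_mul_Ioi hb hy, one_div, inv_rpow hy.le, rpow_neg hy.le, mul_comm]
  have integrable {b : ℝ} (hb : 0 < b) :
      IntegrableOn (fun r ↦ r ^ (b - 1) * exp (-(y * r))) (Ioi 0) := by
    simpa using integrableOn_rpow_mul_exp_neg_mul_rpow (by linarith : -1 < b - 1) one_pos hy
  set μ := volume.restrict (Ioi (0 : ℝ))
  set w : ℝ → ℝ := fun r ↦ r ^ (a - 1) * exp (-(y * r))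
  have integrable_main : Integrable (fun r ↦ c * w r) μ := (integrable ha).const_mul c
  have integrable_bound : Integrable (fun r ↦ C * (r ^ (a + 1 - 1) * exp (-(y * r)))) μ :=
    (integrable (by linarith : 0 < a + 1)).const_mul C
  have error_le : ∀ᵐ r ∂μ, ‖w r * f r - c * w r‖ ≤ C * (r ^ (a + 1 - 1) * exp (-(y * r))) := by
    refine (ae_restrict_iff' measurableSet_Ioi).2 (.of_forall fun r (hr : 0 < r) ↦ ?_)
    have w_nonneg : 0 ≤ w r := by positivity
    calc ‖w r * f r - c * w r‖ = w r * |f r - c| := by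
          rw [mul_comm c, ← mul_sub, norm_mul, norm_of_nonneg w_nonneg, norm_eq_abs]
      _ ≤ w r * (C * r) := by gcongr; exact hfc r hr
      _ = C * (r ^ (a + 1 - 1) * exp (-(y * r))) := by
          rw [add_sub_right_comm, rpow_add_one hr.ne']; ring
  have integrable_error : Integrable (fun r ↦ w r * f r - c * w r) μ :=
    integrable_bound.mono' (((integrable ha).1.mul hf).sub integrable_main.1) error_le
  have integrable_wf : Integrable (fun r ↦ w r * f r) μ :=
    (integrable_error.add integrable_main).congr (.of_forall fun _ ↦ sub_add_cancel _ _)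
  have := norm_integral_le_of_norm_le integrable_bound error_le
  rwa [integral_sub integrable_wf integrable_main, integral_const_mul, integral_const_mul,
    integral_eq ha, integral_eq (by linarith), ← mul_assoc, ← mul_assoc,
    ← norm_of_nonneg (rpow_nonneg hy.le (-(a + 1)))] at this

lemma abs_sqrt_two_sub_pow_sub_le (m : ℕ) {r : ℝ} (hr : 0 < r) :
    |√(2 - r) ^ m - √2 ^ m| ≤ m * √2 ^ (m - 1) * r := by
  have sqrt_le : √(2 - r) ≤ √2 := sqrt_le_sqrt (by linarith)
  have one_le_sqrt_two : 1 ≤ √2 := one_le_sqrt.2 one_le_two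
  have sq_le : 2 - r ≤ √(2 - r) ^ 2 := by
    rw [← sqrt_le_sqrt_iff (sq_nonneg _), sqrt_sq (sqrt_nonneg _)]
  have abs_le : |√(2 - r) - √2| ≤ r := by
    rw [abs_sub_comm, abs_of_nonneg (sub_nonneg.2 sqrt_le)]
    nlinarith [sq_sqrt zero_le_two, sqrt_nonneg (2 - r)]
  calc |√(2 - r) ^ m - √2 ^ m|
      ≤ |√(2 - r) - √2| * m * max |√(2 - r)| |√2| ^ (m - 1) := abs_pow_sub_pow_le ..
    _ = m * √2 ^ (m - 1) * |√(2 - r) - √2| := by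
        rw [abs_of_nonneg (sqrt_nonneg _), abs_of_nonneg (sqrt_nonneg _), max_eq_right sqrt_le]
        ring
    _ ≤ m * √2 ^ (m - 1) * r := by gcongr

/-- The substitution `r = 1 - cos θ`. -/
lemma integral_exp_mul_cos_mul_sin_pow_eq_integral_zero_two (m : ℕ) (y : ℝ) :
    ∫ θ in 0..π, exp (y * cos θ) * sin θ ^ (m + 1) =
      exp y * ∫ r in 0..2, (√r * √(2 - r)) ^ m * exp (-(y * r)) := by
  have substitution := intervalIntegral.integral_comp_mul_deriv (a := 0) (b := π)
    (f := fun θ ↦ 1 - cos θ) (f' := sin) (g := fun r ↦ (√r * √(2 - r)) ^ m * exp (-(y * r)))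
    (fun θ _ ↦ by simpa using (hasDerivAt_cos θ).const_sub 1) (by fun_prop) (by fun_prop)
  rw [cos_zero, cos_pi, sub_self, show (1 : ℝ) - -1 = 2 by norm_num] at substitution
  rw [← substitution, ← intervalIntegral.integral_const_mul]
  refine intervalIntegral.integral_congr fun θ hθ ↦ ?_
  rw [uIcc_of_le pi_nonneg] at hθ
  have sqrt_mul_sqrt : √(1 - cos θ) * √(2 - (1 - cos θ)) = sin θ := by
    rw [← sqrt_mul (sub_nonneg.2 (cos_le_one θ)), sin_eq_sqrt_one_sub_cos_sq hθ.1 hθ.2]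
    ring_nf
  simp only [Function.comp_apply, sqrt_mul_sqrt]
  rw [show y * cos θ = y + -(y * (1 - cos θ)) by ring, exp_add]
  ring

/-- The interval of integration extends to `Ioi 0` because `√(2 - r)` vanishes for `r ≥ 2`. -/
lemma integral_exp_mul_cos_mul_sin_pow_eq_integral_Ioi (m : ℕ) (y : ℝ) :
    ∫ θ in 0..π, exp (y * cos θ) * sin θ ^ (m + 2) = exp y *
      ∫ r in Ioi 0, r ^ (((m : ℝ) + 3) / 2 - 1) * exp (-(y * r)) * √(2 - r) ^ (m + 1) := by
  rw [integral_exp_mul_cos_mul_sin_pow_eq_integral_zero_two,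
    intervalIntegral.integral_of_le zero_le_two,
    ← setIntegral_eq_of_subset_of_forall_sdiff_eq_zero measurableSet_Ioi Ioc_subset_Ioi_self]
  · congr 1
    refine setIntegral_congr_fun measurableSet_Ioi fun r (hr : 0 < r) ↦ ?_
    have sqrt_pow : √r ^ (m + 1) = r ^ (((m : ℝ) + 3) / 2 - 1) := by
      rw [sqrt_eq_rpow, ← rpow_mul_natCast hr.le]
      push_cast
      ring_nf
    simp only [mul_pow, sqrt_pow]
    ring
  · rintro r ⟨hr, hr'⟩
    have two_lt : 2 < r := not_le.1 fun h ↦ hr' ⟨hr, h⟩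
    simp [sqrt_eq_zero_of_nonpos (sub_nonpos.2 two_lt.le)]

lemma isBigO_integral_exp_mul_cos_mul_sin_pow (m : ℕ) :
    (fun y ↦ (∫ θ in 0..π, exp (y * cos θ) * sin θ ^ (m + 2)) -
        √2 ^ (m + 1) * Gamma (((m : ℝ) + 3) / 2) * y ^ (-(((m : ℝ) + 3) / 2)) * exp y)
      =O[atTop] fun y ↦ y ^ (-(((m : ℝ) + 3) / 2 + 1)) * exp y := by
  have watson := isBigO_integral_rpow_mul_exp_neg_mul_Ioi (a := ((m : ℝ) + 3) / 2)
    (by positivity) (Continuous.aestronglyMeasurable (by fun_prop))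
    (fun r hr ↦ abs_sqrt_two_sub_pow_sub_le (m + 1) hr)
  refine (watson.mul (isBigO_refl exp atTop)).congr_left fun y ↦ ?_
  rw [integral_exp_mul_cos_mul_sin_pow_eq_integral_Ioi]
  ring

lemma isBigO_besselSeries_sq (n : ℕ) :
    (fun x ↦ besselSeries (n + 1) (x ^ 2) -
        1 / (2 * √π) * x ^ (-((n : ℝ) + 3 / 2)) * exp (2 * x))
      =O[atTop] fun x ↦ x ^ (-((n : ℝ) + 5 / 2)) * exp (2 * x) := by
  have Gamma_ne_zero : Gamma ((n : ℝ) + 3 / 2) ≠ 0 := (Gamma_pos_of_pos (by positivity)).ne'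
  have two_mul_tendsto : Tendsto (fun x : ℝ ↦ 2 * x) atTop atTop :=
    tendsto_id.const_mul_atTop two_pos
  have exponent_eq : (((2 * n : ℕ) : ℝ) + 3) / 2 = n + 3 / 2 := by push_cast; ring
  have sqrt_two_pow : √2 ^ (2 * n + 1) * 2 ^ (-((n : ℝ) + 3 / 2)) = 1 / 2 := by
    rw [sqrt_eq_rpow, ← rpow_mul_natCast zero_le_two, ← rpow_add two_pos,
      show 1 / 2 * ((2 * n + 1 : ℕ) : ℝ) + -(n + 3 / 2) = -1 by push_cast; ring,
      rpow_neg_one, one_div]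
  have scaled := ((isBigO_integral_exp_mul_cos_mul_sin_pow (2 * n)).comp_tendsto
    two_mul_tendsto).const_mul_left (√π * Gamma ((n : ℝ) + 3 / 2))⁻¹
  rw [exponent_eq, show (n : ℝ) + 3 / 2 + 1 = n + 5 / 2 by ring] at scaled
  refine (scaled.congr' ?_ ?_).of_const_mul_right (c := 2 ^ (-((n : ℝ) + 5 / 2)))
  · filter_upwards [eventually_gt_atTop 0] with x hx
    have poisson := sqrt_pi_mul_Gamma_mul_besselSeries_sq (n + 1) x
    rw [show ((n + 1 : ℕ) : ℝ) + 1 / 2 = n + 3 / 2 by push_cast; ring] at poisson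
    rw [Function.comp_apply, ← mul_add_one, ← poisson, mul_rpow zero_le_two hx.le]
    calc _ = besselSeries (n + 1) (x ^ 2) -
          (√π)⁻¹ * (√2 ^ (2 * n + 1) * 2 ^ (-((n : ℝ) + 3 / 2))) *
            x ^ (-((n : ℝ) + 3 / 2)) * exp (2 * x) := by field_simp [Gamma_ne_zero]
      _ = _ := by rw [sqrt_two_pow]; ring
  · filter_upwards [eventually_gt_atTop 0] with x hx
    rw [Function.comp_apply, mul_rpow zero_le_two hx.le, mul_assoc]

lemma isBigO_besselSeries (n : ℕ) :
    (fun w ↦ besselSeries (n + 1) w - 1 / (2 * √π) * w ^ (-((n : ℝ) / 2 + 3 / 4)) * exp (2 * √w))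
      =O[atTop] fun w ↦ w ^ (-((n : ℝ) / 2 + 5 / 4)) * exp (2 * √w) := by
  have sqrt_rpow {w : ℝ} (hw : 0 ≤ w) (s : ℝ) : √w ^ s = w ^ (s / 2) := by
    rw [sqrt_eq_rpow, ← rpow_mul hw, one_div_mul_eq_div]
  refine ((isBigO_besselSeries_sq n).comp_tendsto tendsto_sqrt_atTop).congr' ?_ ?_
  all_goals
    filter_upwards [eventually_ge_atTop 0] with w hw
    simp only [Function.comp_apply, sq_sqrt hw, sqrt_rpow hw]
    ring_nf

lemma isBigO_besselSeries_two :
    besselSeries 2 =O[atTop] fun w ↦ w ^ (-(5 / 4) : ℝ) * exp (2 * √w) := by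
  have leading : (fun w ↦ 1 / (2 * √π) * w ^ (-(5 / 4) : ℝ) * exp (2 * √w))
      =O[atTop] fun w ↦ w ^ (-(5 / 4) : ℝ) * exp (2 * √w) := by
    simpa only [mul_assoc] using isBigO_const_mul_self (1 / (2 * √π)) _ _
  have error_le : (fun w : ℝ ↦ w ^ (-(7 / 4) : ℝ) * exp (2 * √w))
      =O[atTop] fun w ↦ w ^ (-(5 / 4) : ℝ) * exp (2 * √w) := by
    refine IsBigO.mul (.of_bound 1 ?_) (isBigO_refl _ _)
    filter_upwards [eventually_ge_atTop 1] with w hw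
    rw [one_mul, norm_of_nonneg (by positivity), norm_of_nonneg (by positivity)]
    exact rpow_le_rpow_of_exponent_le hw (by norm_num)
  have asymptotics := isBigO_besselSeries 1
  norm_num only [Nat.cast_one] at asymptotics
  simpa using (asymptotics.trans error_le).add leading

end BesselSeries

section Coefficients

open Real Finset
open scoped Nat

lemma factorial_succ_mul_factorial_succ_le (a b : ℕ) :
    (a + 1)! * (b + 1)! ≤ (a + (b + 1))! := by
  induction b with
  | zero => simp
  | succ b ih =>
    calc (a + 1)! * (b + 1 + 1)! = (b + 1 + 1) * ((a + 1)! * (b + 1)!) := by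
          rw [Nat.factorial_succ (b + 1)]; ring
      _ ≤ (a + (b + 1) + 1) * (a + (b + 1))! := Nat.mul_le_mul (by omega) ih
      _ = (a + (b + 1 + 1))! := (Nat.factorial_succ _).symm

/-- The term `j = 0` of the sum is the subtracted one. The factor `2 ^ m` bounds the binomial
coefficients and, for `j ≥ 1`, `(K + 1)! * j! ≤ (K + j)!`. -/
lemma abs_sum_choose_mul_sub_le (α β : ℝ) (K m : ℕ) :
    |∑ j ∈ range (m + 1), (m - 1).choose j * α ^ j * β ^ (m - j) / ((K + j)! * (m - j)!) -
        β ^ m / (K ! * m !)| ≤ (2 * (|α| + |β|)) ^ m / ((K + 1)! * m !) := by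
  have term_le {j : ℕ} (hj : j + 1 ≤ m) :
      |(m - 1).choose (j + 1) * α ^ (j + 1) * β ^ (m - (j + 1)) /
          ((K + (j + 1))! * (m - (j + 1))!)| ≤
        2 ^ m / ((K + 1)! * m !) * (|α| ^ (j + 1) * |β| ^ (m - (j + 1)) * m.choose (j + 1)) := by
    have choose_le : ((m - 1).choose (j + 1) : ℝ) ≤ 2 ^ m := mod_cast
      (Nat.choose_le_two_pow _ _).trans (Nat.pow_le_pow_right two_pos (m.sub_le 1))
    have factorial_le : ((K + 1)! * (j + 1)! : ℝ) ≤ (K + (j + 1))! := mod_cast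
      factorial_succ_mul_factorial_succ_le K j
    rw [Nat.cast_choose ℝ hj]
    simp only [abs_div, abs_mul, abs_pow, Nat.abs_cast]
    calc _ ≤ 2 ^ m * |α| ^ (j + 1) * |β| ^ (m - (j + 1)) /
          ((K + 1)! * (j + 1)! * (m - (j + 1))!) := by gcongr
      _ = _ := by field_simp
  rw [sum_range_succ']
  simp only [Nat.choose_zero_right, Nat.cast_one, pow_zero, one_mul, add_zero, Nat.sub_zero,
    add_sub_cancel_right]
  calc _ ≤ ∑ j ∈ range m, 2 ^ m / ((K + 1)! * m !) *
          (|α| ^ (j + 1) * |β| ^ (m - (j + 1)) * m.choose (j + 1)) :=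
        (abs_sum_le_sum_abs _ _).trans (sum_le_sum fun j hj ↦ term_le (mem_range.1 hj))
    _ ≤ ∑ j ∈ range (m + 1), 2 ^ m / ((K + 1)! * m !) *
          (|α| ^ j * |β| ^ (m - j) * m.choose j) := by
        rw [sum_range_succ' _ m]
        exact le_add_of_nonneg_right (by positivity)
    _ = (2 * (|α| + |β|)) ^ m / ((K + 1)! * m !) := by
        rw [← mul_sum, ← add_pow, mul_pow]
        ring

lemma norm_tsum_sub_le_of_norm_sub_le {ι E : Type*} [NormedAddCommGroup E] [CompleteSpace E]
    {f g : ι → E} {h : ι → ℝ} {a : E} {b : ℝ} (hg : HasSum g a) (hh : HasSum h b)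
    (hfg : ∀ i, ‖f i - g i‖ ≤ h i) : ‖∑' i, f i - a‖ ≤ b := by
  have summable_f : Summable f := by
    simpa using (Summable.of_norm_bounded hh.summable hfg).add hg.summable
  exact (summable_f.hasSum.sub hg).norm_le_of_bounded hh hfg

variable (lam t η₁ η₂ p q : ℝ)

lemma poisCoef_mul_Qcoef (m K : ℕ) :
    poisCoef lam t (m + K) * Qcoef η₁ η₂ p q (m + K) K =
      exp (-(lam * t)) * (lam * t * q) ^ K *
        ∑ j ∈ range (m + 1), (m - 1).choose j * (η₂ * lam * t * q / (η₁ + η₂)) ^ j *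
          (η₁ * lam * t * p / (η₁ + η₂)) ^ (m - j) / ((K + j)! * (m - j)!) := by
  obtain _ | m := m
  · simp [poisCoef, Qcoef, mul_pow]
    ring
  · rw [poisCoef, Qcoef, if_neg (by omega), sum_Ico_eq_sum_range, sum_range_succ _ (m + 1),
      Nat.add_sub_cancel, Nat.add_sub_cancel, Nat.choose_succ_self, mul_sum]
    simp only [Nat.cast_zero, zero_mul, zero_div, add_zero, mul_sum]
    refine sum_congr rfl fun j hj ↦ ?_
    obtain ⟨l, rfl⟩ := Nat.exists_eq_add_of_le (Nat.lt_succ_iff.1 (mem_range.1 hj))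
    rw [Nat.cast_choose ℝ (show K + j ≤ j + l + 1 + K by omega),
      show j + l + 1 + K - (K + j) = l + 1 by omega,
      show j + l + 1 - j = l + 1 by omega, Nat.add_sub_cancel_left]
    field_simp
    ring

lemma abs_tsum_poisCoef_mul_Qcoef_sub_le (K : ℕ) :
    |∑' m : ℕ, poisCoef lam t (m + K) * Qcoef η₁ η₂ p q (m + K) K -
        exp (η₁ * lam * t * p / (η₁ + η₂) - lam * t) * (lam * t * q) ^ K / K !| ≤
      exp (-(lam * t) + 2 * (|η₂ * lam * t * q / (η₁ + η₂)| + |η₁ * lam * t * p / (η₁ + η₂)|)) *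
        |lam * t * q| ^ K / (K + 1)! := by
  set α := η₂ * lam * t * q / (η₁ + η₂)
  set β := η₁ * lam * t * p / (η₁ + η₂)
  have sum_main := (hasSum_pow_div_factorial β).mul_left
    (exp (-(lam * t)) * (lam * t * q) ^ K / K !)
  have sum_error := (hasSum_pow_div_factorial (2 * (|α| + |β|))).mul_left
    (exp (-(lam * t)) * |lam * t * q| ^ K / (K + 1)!)
  have term_le (m : ℕ) : ‖poisCoef lam t (m + K) * Qcoef η₁ η₂ p q (m + K) K -
      exp (-(lam * t)) * (lam * t * q) ^ K / K ! * (β ^ m / m !)‖ ≤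
        exp (-(lam * t)) * |lam * t * q| ^ K / (K + 1)! * ((2 * (|α| + |β|)) ^ m / m !) := by
    calc _ = ‖exp (-(lam * t)) * (lam * t * q) ^ K *
          (∑ j ∈ range (m + 1), (m - 1).choose j * α ^ j * β ^ (m - j) / ((K + j)! * (m - j)!) -
            β ^ m / (K ! * m !))‖ := by
          rw [poisCoef_mul_Qcoef]
          congr 1
          ring
      _ ≤ exp (-(lam * t)) * |lam * t * q| ^ K *
          ((2 * (|α| + |β|)) ^ m / ((K + 1)! * m !)) := by
          rw [norm_mul, norm_mul, norm_pow, norm_of_nonneg (exp_nonneg _)]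
          exact mul_le_mul_of_nonneg_left (abs_sum_choose_mul_sub_le α β K m) (by positivity)
      _ = _ := by ring
  calc _ = ‖∑' m : ℕ, poisCoef lam t (m + K) * Qcoef η₁ η₂ p q (m + K) K -
        exp (-(lam * t)) * (lam * t * q) ^ K / K ! * exp β‖ := by
        rw [norm_eq_abs, sub_eq_neg_add β, exp_add]
        congr 2
        ring
    _ ≤ exp (-(lam * t)) * |lam * t * q| ^ K / (K + 1)! * exp (2 * (|α| + |β|)) :=
        norm_tsum_sub_le_of_norm_sub_le sum_main sum_error term_le
    _ = _ := by rw [exp_add]; ring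

lemma abs_bCoef_sub_le (k : ℕ) :
    |bCoef lam t η₁ η₂ p q k - exp (η₁ * lam * t * p / (η₁ + η₂) - lam * t) *
        ((η₂ * lam * t * q) ^ (k + 1) / (k ! * (k + 1)!))| ≤
      exp (-(lam * t) + 2 * (|η₂ * lam * t * q / (η₁ + η₂)| + |η₁ * lam * t * p / (η₁ + η₂)|)) *
        (|η₂ * lam * t * q| ^ (k + 1) / (k ! * (k + 2)!)) := by
  have scaled := mul_le_mul_of_nonneg_left
    (abs_tsum_poisCoef_mul_Qcoef_sub_le lam t η₁ η₂ p q (k + 1))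
    (abs_nonneg (η₂ ^ (k + 1) / k !))
  rw [← abs_mul, mul_sub, ← bCoef] at scaled
  refine le_of_eq_of_le ?_ (scaled.trans_eq ?_)
  · congr 2
    rw [show η₂ * lam * t * q = η₂ * (lam * t * q) by ring, mul_pow]
    field_simp
  · rw [show η₂ * lam * t * q = η₂ * (lam * t * q) by ring, abs_mul η₂ (lam * t * q), mul_pow,
      abs_div, abs_pow, Nat.abs_cast]
    field_simp

lemma abs_G2m_sub_le (u : ℝ) :
    |G2m lam t η₁ η₂ p q u - exp (η₁ * lam * t * p / (η₁ + η₂) - lam * t) *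
        (η₂ * lam * t * q * besselSeries 1 (η₂ * lam * t * q * u))| ≤
      exp (-(lam * t) + 2 * (|η₂ * lam * t * q / (η₁ + η₂)| + |η₁ * lam * t * p / (η₁ + η₂)|)) *
        (|η₂ * lam * t * q| * besselSeries 2 |η₂ * lam * t * q * u|) := by
  set z := η₂ * lam * t * q
  refine norm_tsum_sub_le_of_norm_sub_le
    (((summable_besselSeries 1 (z * u)).hasSum.mul_left z).mul_left _)
    (((summable_besselSeries 2 |z * u|).hasSum.mul_left |z|).mul_left _) fun k ↦ ?_
  refine le_of_eq_of_le ?_ ((mul_le_mul_of_nonneg_right (abs_bCoef_sub_le lam t η₁ η₂ p q k)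
    (abs_nonneg (u ^ k))).trans_eq ?_)
  · rw [← abs_mul, norm_eq_abs, sub_mul]
    congr 2
    ring
  · rw [abs_mul z, abs_pow]
    ring

end Coefficients

section Asymptotics

open Real

variable {lam t η₁ η₂ p q : ℝ}

lemma isBigO_G2m_sub_besselSeries (hz : 0 ≤ η₂ * lam * t * q) :
    (fun u ↦ G2m lam t η₁ η₂ p q u - exp (η₁ * lam * t * p / (η₁ + η₂) - lam * t) *
        (η₂ * lam * t * q * besselSeries 1 (η₂ * lam * t * q * u)))
      =O[atTop] fun u ↦ besselSeries 2 (η₂ * lam * t * q * u) := by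
  refine .of_bound (exp (-(lam * t) + 2 * (|η₂ * lam * t * q / (η₁ + η₂)| +
    |η₁ * lam * t * p / (η₁ + η₂)|)) * |η₂ * lam * t * q|) ?_
  filter_upwards [eventually_ge_atTop 0] with u hu
  refine (abs_G2m_sub_le lam t η₁ η₂ p q u).trans ?_
  rw [abs_of_nonneg (mul_nonneg hz hu), mul_assoc (exp _)]
  gcongr
  exact le_norm_self _

lemma isBigO_G2m_scaled (hz : 0 < η₂ * lam * t * q) :
    (fun u ↦ G2m lam t η₁ η₂ p q u - 1 / (2 * √π) * (η₂ * lam * t * q) *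
        exp (η₁ * lam * t * p / (η₁ + η₂) - lam * t) * (η₂ * lam * t * q * u) ^ (-(3 / 4) : ℝ) *
          exp (2 * √(η₂ * lam * t * q * u)))
      =O[atTop] fun u ↦ (η₂ * lam * t * q * u) ^ (-(5 / 4) : ℝ) *
        exp (2 * √(η₂ * lam * t * q * u)) := by
  have series_error := isBigO_G2m_sub_besselSeries (η₁ := η₁) (p := p) hz.le
  set z := η₂ * lam * t * q
  set E := exp (η₁ * lam * t * p / (η₁ + η₂) - lam * t)
  have tendsto_mul : Tendsto (fun u ↦ z * u) atTop atTop := tendsto_id.const_mul_atTop hz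
  have bessel_error := ((isBigO_besselSeries 0).comp_tendsto tendsto_mul).const_mul_left (E * z)
  norm_num only [Nat.cast_zero] at bessel_error
  refine ((series_error.trans (isBigO_besselSeries_two.comp_tendsto tendsto_mul)).add
    bessel_error).congr_left fun u ↦ ?_
  simp only [Function.comp_apply]
  ring

lemma isBigO_G2m (hz : 0 < η₂ * lam * t * q) :
    (fun u ↦ G2m lam t η₁ η₂ p q u - 1 / (2 * √π) * (η₂ * lam * t * q) ^ ((1 : ℝ) / 4) *
        exp (η₁ * lam * t * p / (η₁ + η₂) - lam * t) * u ^ (-(3 : ℝ) / 4) *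
          exp (2 * √(η₂ * lam * t * q) * √u))
      =O[atTop] fun u ↦ 1 / (2 * √π) * (η₂ * lam * t * q) ^ ((1 : ℝ) / 4) *
        exp (η₁ * lam * t * p / (η₁ + η₂) - lam * t) * u ^ (-(3 : ℝ) / 4) *
          exp (2 * √(η₂ * lam * t * q) * √u) * u ^ (-(1 : ℝ) / 2) := by
  have asymptotics := isBigO_G2m_scaled (η₁ := η₁) (p := p) hz
  set z := η₂ * lam * t * q
  set E := exp (η₁ * lam * t * p / (η₁ + η₂) - lam * t)
  have z_rpow : z * z ^ (-(3 / 4) : ℝ) = z ^ ((1 : ℝ) / 4) := by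
    rw [← rpow_one_add' hz.le (by norm_num)]
    norm_num
  refine (asymptotics.congr' ?_ ?_).of_const_mul_right
    (c := z ^ (-(5 / 4) : ℝ) / (1 / (2 * √π) * z ^ ((1 : ℝ) / 4) * E))
  · filter_upwards [eventually_ge_atTop 0] with u hu
    rw [mul_rpow hz.le hu, sqrt_mul hz.le, ← z_rpow, neg_div]
    ring_nf
  · filter_upwards [eventually_gt_atTop 0] with u hu
    have u_rpow : u ^ (-(5 / 4) : ℝ) = u ^ (-(3 : ℝ) / 4) * u ^ (-(1 : ℝ) / 2) := by
      rw [← rpow_add hu]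
      norm_num
    rw [mul_rpow hz.le hu.le, sqrt_mul hz.le, u_rpow, ← mul_assoc 2]
    field_simp [show E ≠ 0 from exp_ne_zero _]

theorem H2_asymptotics_at_zero_general (hz : 0 < η₂ * lam * t * q) (_hη : η₁ + η₂ ≠ 0) :
    (fun x ↦ H2fun lam t η₁ η₂ p q x -
        1 / (2 * √π) * (η₂ * lam * t * q) ^ ((1:ℝ)/4) *
          exp (η₁ * lam * t * p / (η₁ + η₂) - lam * t) *
          (log x⁻¹) ^ (-(3:ℝ)/4) * exp (2 * √(η₂ * lam * t * q) * √(log x⁻¹)))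
      =O[nhdsWithin 0 (Set.Ioi 0)]
      (fun x ↦
        1 / (2 * √π) * (η₂ * lam * t * q) ^ ((1:ℝ)/4) *
          exp (η₁ * lam * t * p / (η₁ + η₂) - lam * t) *
          (log x⁻¹) ^ (-(3:ℝ)/4) * exp (2 * √(η₂ * lam * t * q) * √(log x⁻¹)) *
          (log x⁻¹) ^ (-(1:ℝ)/2)) :=
  (isBigO_G2m hz).comp_tendsto (tendsto_log_atTop.comp tendsto_inv_nhdsGT_zero)

end Asymptotics

/-- Theorem: asymptotic behavior of `H₂(t,x)` as `x → 0`: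
`H₂(t,x) = (1/(2√π)) (η₂λtq)^{1/4} exp{η₁λtp/(η₁+η₂) − λt} (log(1/x))^{−3/4}`
`· exp{2√(η₂λtq) √(log(1/x))} (1 + O((log(1/x))^{−1/2}))` as `x → 0`. -/
theorem H2_asymptotics_at_zero
    (t lam η₁ η₂ p q : ℝ)
    (ht : 0 < t) (hlam : 0 < lam) (hη₁ : 1 < η₁) (hη₂ : 0 < η₂)
    (hp : 0 < p) (hq : 0 < q) (hpq : p + q = 1) :
    (fun x => H2fun lam t η₁ η₂ p q x -
        1 / (2 * Real.sqrt Real.pi) * (η₂ * lam * t * q) ^ ((1:ℝ)/4) *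
          Real.exp (η₁ * lam * t * p / (η₁ + η₂) - lam * t) *
          (Real.log x⁻¹) ^ (-(3:ℝ)/4) *
          Real.exp (2 * Real.sqrt (η₂ * lam * t * q) * Real.sqrt (Real.log x⁻¹)))
      =O[nhdsWithin 0 (Set.Ioi 0)]
      (fun x =>
        1 / (2 * Real.sqrt Real.pi) * (η₂ * lam * t * q) ^ ((1:ℝ)/4) *
          Real.exp (η₁ * lam * t * p / (η₁ + η₂) - lam * t) *
          (Real.log x⁻¹) ^ (-(3:ℝ)/4) *
          Real.exp (2 * Real.sqrt (η₂ * lam * t * q) * Real.sqrt (Real.log x⁻¹)) *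
          (Real.log x⁻¹) ^ (-(1:ℝ)/2)) :=
  H2_asymptotics_at_zero_general (by positivity) (add_pos (by linarith) hη₂).ne'
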